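/- Let H₁, H₂ : 𝕋^n × ℝ^n → ℝ be continuous and satisfy (A1), let (u₁, u₂) be the viscosity solution of (C) with continuous initial data (u₀₁, u₀₂), and let c be the ergodic constant of (E). Then there exists a constant C > 0 such that |u_i(x,t) + ct| ≤ C for all (x,t) ∈ 𝕋^n × [0,∞) and i = 1,2. -/

import Mathlib

open MeasureTheory Filter Topology Set

noncomputable section

/-- Euclidean space `ℝ^n`; the torus `𝕋^n` is modelled by `ℤ^n`-periodic functions on it. -/
abbrev En (n : ℕ) : Type := EuclideanSpace ℝ (Fin n)

/-- The integer vector `k ∈ ℤ^n` viewed as an element of `ℝ^n`. -/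
def intVec (n : ℕ) (k : Fin n → ℤ) : En n := WithLp.toLp 2 (fun i => (k i : ℝ))

/-- A `ℤ^n`-periodic function on `ℝ^n`, i.e. a function on the torus `𝕋^n`. -/
def ZPeriodic {n : ℕ} (f : En n → ℝ) : Prop :=
  ∀ (x : En n) (k : Fin n → ℤ), f (x + intVec n k) = f x

/-- A Hamiltonian `H : 𝕋^n × ℝ^n → ℝ` (periodic in the first variable). -/
def ZPeriodicH {n : ℕ} (H : En n → En n → ℝ) : Prop :=
  ∀ (x : En n) (k : Fin n → ℤ) (p : En n), H (x + intVec n k) p = H x p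

/-- A function on `𝕋^n × ℝ` (space-time, periodic in space). -/
def ZPeriodicST {n : ℕ} (u : En n × ℝ → ℝ) : Prop :=
  ∀ (x : En n) (k : Fin n → ℤ) (t : ℝ), u (x + intVec n k, t) = u (x, t)

/-- (A1): coercivity, `lim_{r→∞} inf{H(x,p) : x ∈ 𝕋^n, |p| ≥ r} = ∞`. -/
def Coercive {n : ℕ} (H : En n → En n → ℝ) : Prop :=
  ∀ M : ℝ, ∃ r : ℝ, ∀ (x p : En n), r ≤ ‖p‖ → M ≤ H x p

/-- Coercivity for an `x`-independent Hamiltonian. -/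
def CoerciveP {n : ℕ} (H : En n → ℝ) : Prop :=
  ∀ M : ℝ, ∃ r : ℝ, ∀ p : En n, r ≤ ‖p‖ → M ≤ H p

/-- Lipschitz continuity (membership in `W^{1,∞}`). -/
def IsLip {n : ℕ} (f : En n → ℝ) : Prop := ∃ K : NNReal, LipschitzWith K f

/-- Viscosity subsolution inequality for one stationary equation
`H(x, Dw) + c (w - wo) ≤ ρ(x)` of a weakly coupled system. -/
def StatSubIneq {n : ℕ} (H : En n → En n → ℝ) (c : ℝ) (w wo : En n → ℝ) (ρ : En n → ℝ) : Prop :=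
  ∀ φ : En n → ℝ, ContDiff ℝ 1 φ →
    ∀ x₀ : En n, IsLocalMax (fun x => w x - φ x) x₀ →
      H x₀ (gradient φ x₀) + c * (w x₀ - wo x₀) ≤ ρ x₀

/-- Viscosity supersolution inequality for one stationary equation. -/
def StatSuperIneq {n : ℕ} (H : En n → En n → ℝ) (c : ℝ) (w wo : En n → ℝ) (ρ : En n → ℝ) : Prop :=
  ∀ φ : En n → ℝ, ContDiff ℝ 1 φ →
    ∀ x₀ : En n, IsLocalMin (fun x => w x - φ x) x₀ →
      ρ x₀ ≤ H x₀ (gradient φ x₀) + c * (w x₀ - wo x₀)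

/-- Viscosity subsolution of the stationary system
`Hᵢ(x, Dwᵢ) + cᵢ (wᵢ - wⱼ) = ρᵢ(x)`, `i = 1,2`. -/
def CellSub {n : ℕ} (H₁ H₂ : En n → En n → ℝ) (c₁ c₂ : ℝ) (w₁ w₂ : En n → ℝ)
    (ρ₁ ρ₂ : En n → ℝ) : Prop :=
  StatSubIneq H₁ c₁ w₁ w₂ ρ₁ ∧ StatSubIneq H₂ c₂ w₂ w₁ ρ₂

/-- Viscosity supersolution of the stationary system. -/
def CellSuper {n : ℕ} (H₁ H₂ : En n → En n → ℝ) (c₁ c₂ : ℝ) (w₁ w₂ : En n → ℝ)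
    (ρ₁ ρ₂ : En n → ℝ) : Prop :=
  StatSuperIneq H₁ c₁ w₁ w₂ ρ₁ ∧ StatSuperIneq H₂ c₂ w₂ w₁ ρ₂

/-- Viscosity solution (continuous, sub- and supersolution) of the stationary system. -/
def CellSolution {n : ℕ} (H₁ H₂ : En n → En n → ℝ) (c₁ c₂ : ℝ) (v₁ v₂ : En n → ℝ)
    (ρ₁ ρ₂ : En n → ℝ) : Prop :=
  Continuous v₁ ∧ Continuous v₂ ∧
    CellSub H₁ H₂ c₁ c₂ v₁ v₂ ρ₁ ρ₂ ∧ CellSuper H₁ H₂ c₁ c₂ v₁ v₂ ρ₁ ρ₂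

/-- Subsolution of the ergodic problem (E) with constant `c` (coupling constants 1). -/
def ErgSub {n : ℕ} (H₁ H₂ : En n → En n → ℝ) (v₁ v₂ : En n → ℝ) (c : ℝ) : Prop :=
  CellSub H₁ H₂ 1 1 v₁ v₂ (fun _ => c) (fun _ => c)

/-- Supersolution of the ergodic problem (E). -/
def ErgSuper {n : ℕ} (H₁ H₂ : En n → En n → ℝ) (v₁ v₂ : En n → ℝ) (c : ℝ) : Prop :=
  CellSuper H₁ H₂ 1 1 v₁ v₂ (fun _ => c) (fun _ => c)

/-- Viscosity solution of the ergodic problem (E):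
`H₁(x,Dv₁) + v₁ - v₂ = c`, `H₂(x,Dv₂) + v₂ - v₁ = c` on `𝕋^n`. -/
def ErgSolution {n : ℕ} (H₁ H₂ : En n → En n → ℝ) (v₁ v₂ : En n → ℝ) (c : ℝ) : Prop :=
  CellSolution H₁ H₂ 1 1 v₁ v₂ (fun _ => c) (fun _ => c)

/-- Viscosity subsolution inequality for one evolution equation
`∂ₜ u + H(x, Du) + u - uo ≤ 0` in `𝕋^n × (0,∞)`. -/
def EvolSubIneq {n : ℕ} (H : En n → En n → ℝ) (u uo : En n × ℝ → ℝ) : Prop :=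
  ∀ φ : En n × ℝ → ℝ, ContDiff ℝ 1 φ →
    ∀ (x₀ : En n) (t₀ : ℝ), 0 < t₀ →
      IsLocalMax (fun q => u q - φ q) (x₀, t₀) →
      fderiv ℝ φ (x₀, t₀) (0, 1) + H x₀ (gradient (fun y => φ (y, t₀)) x₀)
        + u (x₀, t₀) - uo (x₀, t₀) ≤ 0

/-- Viscosity supersolution inequality for one evolution equation. -/
def EvolSuperIneq {n : ℕ} (H : En n → En n → ℝ) (u uo : En n × ℝ → ℝ) : Prop :=
  ∀ φ : En n × ℝ → ℝ, ContDiff ℝ 1 φ →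
    ∀ (x₀ : En n) (t₀ : ℝ), 0 < t₀ →
      IsLocalMin (fun q => u q - φ q) (x₀, t₀) →
      0 ≤ fderiv ℝ φ (x₀, t₀) (0, 1) + H x₀ (gradient (fun y => φ (y, t₀)) x₀)
        + u (x₀, t₀) - uo (x₀, t₀)

/-- Viscosity subsolution of system (C) (with coupling constants `c₁ = c₂ = 1`). -/
def SysSub {n : ℕ} (H₁ H₂ : En n → En n → ℝ) (u₁ u₂ : En n × ℝ → ℝ) : Prop :=
  EvolSubIneq H₁ u₁ u₂ ∧ EvolSubIneq H₂ u₂ u₁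

/-- Viscosity supersolution of system (C). -/
def SysSuper {n : ℕ} (H₁ H₂ : En n → En n → ℝ) (u₁ u₂ : En n × ℝ → ℝ) : Prop :=
  EvolSuperIneq H₁ u₁ u₂ ∧ EvolSuperIneq H₂ u₂ u₁

/-- Viscosity solution of the Cauchy problem (C): continuous on `𝕋^n × [0,∞)`,
sub- and supersolution, attaining the initial data. -/
def SysSolution {n : ℕ} (H₁ H₂ : En n → En n → ℝ) (u₀₁ u₀₂ : En n → ℝ)
    (u₁ u₂ : En n × ℝ → ℝ) : Prop :=
  ContinuousOn u₁ {q : En n × ℝ | 0 ≤ q.2} ∧ ContinuousOn u₂ {q : En n × ℝ | 0 ≤ q.2} ∧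
    SysSub H₁ H₂ u₁ u₂ ∧ SysSuper H₁ H₂ u₁ u₂ ∧
    (∀ x, u₁ (x, 0) = u₀₁ x) ∧ (∀ x, u₂ (x, 0) = u₀₂ x)

/-- Viscosity subsolution of the single stationary equation `H(x,Dv) ≤ c` on `𝕋^n`. -/
def SingleSub {n : ℕ} (H : En n → En n → ℝ) (v : En n → ℝ) (c : ℝ) : Prop :=
  ∀ φ : En n → ℝ, ContDiff ℝ 1 φ →
    ∀ x₀ : En n, IsLocalMax (fun x => v x - φ x) x₀ → H x₀ (gradient φ x₀) ≤ c

/-- Viscosity supersolution of the single stationary equation `H(x,Dv) ≥ c` on `𝕋^n`. -/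
def SingleSuper {n : ℕ} (H : En n → En n → ℝ) (v : En n → ℝ) (c : ℝ) : Prop :=
  ∀ φ : En n → ℝ, ContDiff ℝ 1 φ →
    ∀ x₀ : En n, IsLocalMin (fun x => v x - φ x) x₀ → c ≤ H x₀ (gradient φ x₀)

/-- Viscosity solution of the single stationary equation `H(x,Dv) = c` on `𝕋^n`. -/
def SingleSolution {n : ℕ} (H : En n → En n → ℝ) (v : En n → ℝ) (c : ℝ) : Prop :=
  Continuous v ∧ SingleSub H v c ∧ SingleSuper H v c

/-- Uniform convergence `u(·,t) → v` on `𝕋^n` as `t → ∞`. -/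
def UnifTendsTo {n : ℕ} (u : En n × ℝ → ℝ) (v : En n → ℝ) : Prop :=
  ∀ ε : ℝ, 0 < ε → ∃ T : ℝ, ∀ t : ℝ, T ≤ t → ∀ x : En n, |u (x, t) - v x| ≤ ε

/-- (A8)⁺ at level `η` with constant `ψ`. -/
def A8plusAt {n : ℕ} (H : En n → En n → ℝ) (η ψ : ℝ) : Prop :=
  ∀ (x p q : En n), η ≤ H x (p + q) → H x q ≤ 0 →
    ∀ μ : ℝ, 0 < μ → μ ≤ 1 → H x (p + q) + ψ * (1 - μ) ≤ μ * H x (μ⁻¹ • p + q)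

/-- (A8)⁻ at level `η` with constant `ψ`. -/
def A8minusAt {n : ℕ} (H : En n → En n → ℝ) (η ψ : ℝ) : Prop :=
  ∀ (x p q : En n), H x (p + q) ≤ -η → 0 ≤ H x q →
    ∀ μ : ℝ, 1 ≤ μ → μ * H x (μ⁻¹ • p + q) ≤ H x (p + q) - ψ * (μ - 1) / μ

/-- (A8)⁺ with threshold `η₀`. -/
def A8plus {n : ℕ} (H : En n → En n → ℝ) (η₀ : ℝ) : Prop :=
  ∀ η : ℝ, 0 < η → η ≤ η₀ → ∃ ψ : ℝ, 0 < ψ ∧ A8plusAt H η ψ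

/-- (A8)⁻ with threshold `η₀`. -/
def A8minus {n : ℕ} (H : En n → En n → ℝ) (η₀ : ℝ) : Prop :=
  ∀ η : ℝ, 0 < η → η ≤ η₀ → ∃ ψ : ℝ, 0 < ψ ∧ A8minusAt H η ψ

/-- The function `F` of the Key Lemma: `F(r) = C r` for `r ≥ 0`, `F(r) = r / C` for `r < 0`. -/
def Fc (C r : ℝ) : ℝ := if 0 ≤ r then C * r else r / C

/-- `α_η⁺(s)` (resp. `β_η⁺(s)` with `u = u₂`):
`min_{x ∈ 𝕋^n, t ≥ s} (u(x,t) - v(x) + η (t-s)) / (u(x,s) - v(x))`. -/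
def alphaPlus {n : ℕ} (u : En n × ℝ → ℝ) (v : En n → ℝ) (η s : ℝ) : ℝ :=
  sInf {r : ℝ | ∃ (x : En n) (t : ℝ), s ≤ t ∧
    r = (u (x, t) - v x + η * (t - s)) / (u (x, s) - v x)}

/-- `α_η⁻(s)` (resp. `β_η⁻(s)` with `u = u₂`):
`max_{x ∈ 𝕋^n, t ≥ s} (u(x,t) - v(x) - η (t-s)) / (u(x,s) - v(x))`. -/
def alphaMinus {n : ℕ} (u : En n × ℝ → ℝ) (v : En n → ℝ) (η s : ℝ) : ℝ :=
  sSup {r : ℝ | ∃ (x : En n) (t : ℝ), s ≤ t ∧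
    r = (u (x, t) - v x - η * (t - s)) / (u (x, s) - v x)}

/-- (A9)⁺. -/
def A9plus {n : ℕ} (H : En n → En n → ℝ) : Prop :=
  ∃ K : Set (En n), IsClosed K ∧ (∀ x ∈ K, ∀ k : Fin n → ℤ, x + intVec n k ∈ K) ∧
    (∀ x ∈ K, (∀ p : En n, 0 ≤ H x p) ∧ ∃ p : En n, H x p = 0) ∧
    (∀ ε : ℝ, 0 < ε → ∃ η₀ : ℝ, 0 < η₀ ∧ ∃ ψ : ℝ → ℝ, (∀ r : ℝ, 0 < r → 0 < ψ r) ∧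
      ∀ η : ℝ, 0 < η → η ≤ η₀ → ∀ (x p q : En n), ε ≤ Metric.infDist x K →
        η ≤ H x (p + q) → H x q ≤ 0 →
        ∀ μ : ℝ, 0 < μ → μ ≤ 1 → H x (p + q) + ψ η * (1 - μ) ≤ μ * H x (μ⁻¹ • p + q))

/-- (A9)⁻. -/
def A9minus {n : ℕ} (H : En n → En n → ℝ) : Prop :=
  ∃ K : Set (En n), IsClosed K ∧ (∀ x ∈ K, ∀ k : Fin n → ℤ, x + intVec n k ∈ K) ∧
    (∀ x ∈ K, (∀ p : En n, 0 ≤ H x p) ∧ ∃ p : En n, H x p = 0) ∧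
    (∀ ε : ℝ, 0 < ε → ∃ η₀ : ℝ, 0 < η₀ ∧ ∃ ψ : ℝ → ℝ, (∀ r : ℝ, 0 < r → 0 < ψ r) ∧
      ∀ η : ℝ, 0 < η → η ≤ η₀ → ∀ (x p q : En n), ε ≤ Metric.infDist x K →
        H x (p + q) ≤ -η → 0 ≤ H x q →
        ∀ μ : ℝ, 1 ≤ μ → μ * H x (μ⁻¹ • p + q) ≤ H x (p + q) - ψ η * (μ - 1) / μ)

/-- (A6): uniform convexity of an `x`-independent Hamiltonian. -/
def UnifConvex {n : ℕ} (H : En n → ℝ) : Prop :=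
  ∃ α : ℝ, 0 < α ∧ ∀ᵐ q : En n ∂volume, DifferentiableAt ℝ H q ∧
    ∀ p : En n, H q + fderiv ℝ H q (p - q) + α * ‖p - q‖ ^ 2 ≤ H p

end

/-!
The argument compares `uᵢ + c t` with `vᵢ`. Coercivity makes `v₁, v₂` Lipschitz: if a cone
`v(y) + K‖x - y‖` is crossed, then at the highest crossing point a paraboloid of slope `K` touches
`v` from above, which the equation forbids for large `K`. Doubling the variables then shows that
`max_{i, x} (uᵢ(x, t) + c t - vᵢ(x))` never exceeds its initial value: at a maximum point of the
index realising the maximum the coupling terms have a favourable sign, and the Lipschitz bound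
keeps the gradients in a compact set, on which `H₁, H₂` are uniformly continuous. The reflection
`H(x, p) ↦ -H(x, -p)`, `(u, v, c) ↦ (-u, -v, -c)` exchanges sub- and supersolutions and turns this
upper bound into the lower one.
-/

section Cone

variable {E : Type*} [NormedAddCommGroup E]

theorem exists_forall_sub_mul_norm_sub_le [ProperSpace E] {v : E → ℝ} (hv : Continuous v) {B : ℝ}
    (hB : ∀ x, v x ≤ B) {K : ℝ} (hK : 0 < K) (y : E) :
    ∃ z, ∀ x, v x - K * ‖x - y‖ ≤ v z - K * ‖z - y‖ := by
  refine Continuous.exists_forall_ge' (by fun_prop) y ?_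
  have far := (tendsto_dist_right_cocompact_atTop y).eventually_ge_atTop ((B - v y) / K)
  filter_upwards [far] with x hx
  rw [div_le_iff₀ hK, dist_eq_norm] at hx
  simp only [sub_self, norm_zero, mul_zero, sub_zero]
  linarith [hB x]

theorem sub_mul_sq_le_of_forall_sub_mul_norm_le {v : E → ℝ} {K : ℝ} (hK : 0 < K) {y z : E}
    (hzy : z ≠ y) (hz : ∀ x, v x - K * ‖x - y‖ ≤ v z - K * ‖z - y‖) (x : E) :
    v x - K / (2 * ‖z - y‖) * ‖x - y‖ ^ 2 ≤ v z - K / (2 * ‖z - y‖) * ‖z - y‖ ^ 2 := by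
  have hρ : 0 < ‖z - y‖ := norm_pos_iff.2 (sub_ne_zero.2 hzy)
  have amgm : K * ‖x - y‖ ≤ K / (2 * ‖z - y‖) * ‖x - y‖ ^ 2 + K / 2 * ‖z - y‖ := by
    rw [← sub_nonneg]
    calc (0 : ℝ) ≤ K / (2 * ‖z - y‖) * (‖x - y‖ - ‖z - y‖) ^ 2 := by positivity
      _ = _ := by field_simp; ring
  have touch : K / (2 * ‖z - y‖) * ‖z - y‖ ^ 2 = K / 2 * ‖z - y‖ := by field_simp
  linarith [hz x]

end Cone

section Gradient

variable {E : Type*} [NormedAddCommGroup E] [InnerProductSpace ℝ E]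

theorem gradient_fun_neg [CompleteSpace E] (φ : E → ℝ) (x : E) :
    gradient (fun y => -φ y) x = -gradient φ x := by
  simp only [gradient, fderiv_fun_neg, map_neg]

theorem gradient_const_mul_norm_sub_sq [CompleteSpace E] (a : ℝ) (x y : E) :
    gradient (fun z => a * ‖z - y‖ ^ 2) x = (2 * a) • (x - y) := by
  refine HasGradientAt.gradient (hasGradientAt_iff_hasFDerivAt.2 ?_)
  refine (((hasFDerivAt_id (𝕜 := ℝ) x).sub_const y).norm_sq.const_mul a).congr_fderiv ?_
  ext w
  simp only [id_eq, map_sub, ContinuousLinearMap.comp_id, smul_apply, sub_apply,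
    coe_innerSL_apply, nsmul_eq_mul, Nat.cast_ofNat, smul_eq_mul, map_smul,
    InnerProductSpace.toDual_apply_apply]
  ring

theorem contDiff_const_mul_norm_sub_sq (a : ℝ) (y : E) :
    ContDiff ℝ 1 fun z => a * ‖z - y‖ ^ 2 :=
  contDiff_const.mul ((contDiff_id.sub contDiff_const).norm_sq ℝ)

theorem lipschitzWith_of_norm_gradient_lt [ProperSpace E] {v : E → ℝ} (hv : Continuous v) {B : ℝ}
    (hB : ∀ x, v x ≤ B) {K : NNReal} (hK : 0 < K)
    (hgrad : ∀ φ : E → ℝ, ContDiff ℝ 1 φ → ∀ x, IsLocalMax (fun z => v z - φ z) x →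
      ‖gradient φ x‖ < K) :
    LipschitzWith K v := by
  refine LipschitzWith.of_le_add_mul K fun x y => ?_
  obtain ⟨z, hz⟩ := exists_forall_sub_mul_norm_sub_le hv hB (NNReal.coe_pos.2 hK) y
  obtain rfl | hzy := eq_or_ne z y
  · have := hz x
    simp only [sub_self, norm_zero, mul_zero, sub_zero] at this
    rw [dist_eq_norm]
    linarith
  · have hρ : ‖z - y‖ ≠ 0 := norm_ne_zero_iff.2 (sub_ne_zero.2 hzy)
    have hlt := hgrad _ (contDiff_const_mul_norm_sub_sq (K / (2 * ‖z - y‖)) y) z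
      (Eventually.of_forall (sub_mul_sq_le_of_forall_sub_mul_norm_le (NNReal.coe_pos.2 hK) hzy hz))
    have slope : ‖(2 * (K / (2 * ‖z - y‖))) • (z - y)‖ = K := by
      rw [norm_smul, Real.norm_of_nonneg (by positivity)]
      field_simp
    rw [gradient_const_mul_norm_sub_sq, slope] at hlt
    exact absurd hlt (lt_irrefl _)

end Gradient

section Periodic

variable {n : ℕ}

theorem exists_add_intVec_mem_closedBall (x : En n) :
    ∃ k : Fin n → ℤ, x + intVec n k ∈ Metric.closedBall 0 (√n) := by
  refine ⟨fun i => -⌊x i⌋, ?_⟩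
  have hfract (i : Fin n) : (x + intVec n fun i => -⌊x i⌋) i = Int.fract (x i) := by
    simp [intVec, Int.fract, sub_eq_add_neg]
  rw [mem_closedBall_zero_iff, EuclideanSpace.norm_eq]
  refine Real.sqrt_le_sqrt ?_
  calc ∑ i, ‖(x + intVec n fun i => -⌊x i⌋) i‖ ^ 2 ≤ ∑ _i : Fin n, (1 : ℝ) := by
        refine Finset.sum_le_sum fun i _ => ?_
        rw [hfract, Real.norm_of_nonneg (Int.fract_nonneg _)]
        exact pow_le_one₀ (Int.fract_nonneg _) (Int.fract_lt_one _).le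
    _ = n := by simp

theorem ZPeriodic.exists_forall_abs_le {f : En n → ℝ} (hper : ZPeriodic f) (hf : Continuous f) :
    ∃ B, ∀ x, |f x| ≤ B := by
  obtain ⟨B, hB⟩ := (isCompact_closedBall (0 : En n) (√n)).exists_bound_of_continuousOn
    hf.continuousOn
  refine ⟨B, fun x => ?_⟩
  obtain ⟨k, hk⟩ := exists_add_intVec_mem_closedBall x
  simpa only [hper x k, Real.norm_eq_abs] using hB _ hk

theorem ZPeriodic.neg {f : En n → ℝ} (hper : ZPeriodic f) : ZPeriodic fun x => -f x :=
  fun x k => congrArg Neg.neg (hper x k)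

theorem ZPeriodicST.neg {u : En n × ℝ → ℝ} (hper : ZPeriodicST u) : ZPeriodicST fun q => -u q :=
  fun x k t => congrArg Neg.neg (hper x k t)

theorem ZPeriodicST.exists_forall_abs_le {u : En n × ℝ → ℝ} (hper : ZPeriodicST u)
    (hu : ContinuousOn u {q | 0 ≤ q.2}) {t : ℝ} (ht : 0 ≤ t) : ∃ B, ∀ x, |u (x, t)| ≤ B :=
  ZPeriodic.exists_forall_abs_le (fun x k => hper x k t)
    (hu.comp_continuous (by fun_prop) fun _ => ht)

theorem ZPeriodicST.exists_forall_sub_le {u : En n × ℝ → ℝ} (huper : ZPeriodicST u)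
    (hu : ContinuousOn u {q | 0 ≤ q.2}) {v : En n → ℝ} (hvper : ZPeriodic v) (hv : Continuous v)
    {t : ℝ} (ht : 0 ≤ t) : ∃ B, ∀ x y, u (x, t) - v y ≤ B := by
  obtain ⟨U, hU⟩ := huper.exists_forall_abs_le hu ht
  obtain ⟨V, hV⟩ := hvper.exists_forall_abs_le hv
  exact ⟨U + V, fun x y => by linarith [(abs_le.1 (hU x)).2, (abs_le.1 (hV y)).1]⟩

theorem StatSubIneq.isLip {H : En n → En n → ℝ} {a c : ℝ} {v vo ρ : En n → ℝ}
    (hsub : StatSubIneq H a v vo ρ) (hcoer : Coercive H) (hρ : ∀ x, ρ x ≤ c) (hv : Continuous v)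
    (hvper : ZPeriodic v) (hvo : Continuous vo) (hvoper : ZPeriodic vo) : IsLip v := by
  obtain ⟨V, hV⟩ := hvper.exists_forall_abs_le hv
  obtain ⟨Vo, hVo⟩ := hvoper.exists_forall_abs_le hvo
  have hcoupling (x : En n) : -(|a| * (V + Vo)) ≤ a * (v x - vo x) := by
    refine (abs_le.1 ?_).1
    rw [abs_mul]
    gcongr
    exact (abs_sub _ _).trans (add_le_add (hV x) (hVo x))
  obtain ⟨r, hr⟩ := hcoer (c + |a| * (V + Vo) + 1)
  refine ⟨(max r 1).toNNReal, lipschitzWith_of_norm_gradient_lt hv (fun x => (abs_le.1 (hV x)).2)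
    (by simp) fun φ hφ x hmax => ?_⟩
  rw [Real.coe_toNNReal _ (by positivity)]
  by_contra! hlarge
  linarith [hsub φ hφ x hmax, hr x _ ((le_max_left r 1).trans hlarge), hcoupling x, hρ x]

end Periodic

section Doubling

/-- The functional of the doubling of variables, at the point `(x, y, t)`: the difference
`u(x, t) - v(y)` with the penalties `N ‖x - y‖²` for leaving the diagonal and `g(t)` in time. -/
noncomputable def doubled {E : Type*} [NormedAddCommGroup E] (u : E × ℝ → ℝ) (v : E → ℝ) (N : ℝ)
    (g : ℝ → ℝ) (q : E × E × ℝ) : ℝ :=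
  u (q.1, q.2.2) - v q.2.1 - N * ‖q.1 - q.2.1‖ ^ 2 - g q.2.2

/-- The domain `E × E × [0, S]` on which the doubled functional is maximised. -/
def doubledDomain (E : Type*) (S : ℝ) : Set (E × E × ℝ) := {q | q.2.2 ∈ Icc 0 S}

section Normed

variable {E : Type*} [NormedAddCommGroup E] {u : E × ℝ → ℝ} {v : E → ℝ} {L : NNReal}
  {N S : ℝ} {g : ℝ → ℝ} {x y : E} {t : ℝ}

theorem doubled_diagonal : doubled u v N g (x, x, t) = u (x, t) - v x - g t := by
  simp [doubled]

theorem doubled_le_diagonal (hv : LipschitzWith L v) (hxy : L ≤ N * ‖x - y‖) :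
    doubled u v N g (x, y, t) ≤ doubled u v N g (x, x, t) := by
  have hlip : v x ≤ v y + L * ‖x - y‖ := dist_eq_norm x y ▸ hv.le_add_mul x y
  have hpen := mul_le_mul_of_nonneg_right hxy (norm_nonneg (x - y))
  rw [doubled_diagonal]
  simp only [doubled]
  linarith

theorem mul_norm_sub_le_of_isMaxOn_doubled (hv : LipschitzWith L v) (ht : t ∈ Icc 0 S)
    (hmax : IsMaxOn (doubled u v N g) (doubledDomain E S) (x, y, t)) : N * ‖x - y‖ ≤ L := by
  obtain hxy | hxy := (norm_nonneg (x - y)).eq_or_lt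
  · simp [← hxy]
  have hdiag : doubled u v N g (x, x, t) ≤ doubled u v N g (x, y, t) :=
    hmax (show (x, x, t) ∈ doubledDomain E S from ht)
  have hlip : v x ≤ v y + L * ‖x - y‖ := dist_eq_norm x y ▸ hv.le_add_mul x y
  rw [doubled_diagonal] at hdiag
  simp only [doubled] at hdiag
  exact le_of_mul_le_mul_right (by linarith) hxy

end Normed

variable {n : ℕ} {H : En n → En n → ℝ} {u uo : En n × ℝ → ℝ} {v vo : En n → ℝ} {L : NNReal}
  {c κ M N S ε : ℝ} {g : ℝ → ℝ}

theorem doubled_add_intVec (huper : ZPeriodicST u) (hvper : ZPeriodic v) (x y : En n) (t : ℝ)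
    (k : Fin n → ℤ) :
    doubled u v N g (x + intVec n k, y + intVec n k, t) = doubled u v N g (x, y, t) := by
  simp only [doubled, huper x k, hvper y k, add_sub_add_right_eq_sub]

theorem continuousOn_doubled (hu : ContinuousOn u {q | 0 ≤ q.2}) (hv : Continuous v)
    (hg : Continuous g) : ContinuousOn (doubled u v N g) (doubledDomain (En n) S) := by
  refine ((ContinuousOn.sub ?_ ?_).sub ?_).sub ?_
  · exact hu.comp (by fun_prop) fun q hq => hq.1
  all_goals fun_prop

theorem exists_isMaxOn_doubled (hu : ContinuousOn u {q | 0 ≤ q.2}) (huper : ZPeriodicST u)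
    (hv : LipschitzWith L v) (hvper : ZPeriodic v) (hg : Continuous g) (hN : 0 < N) (hS : 0 ≤ S) :
    ∃ q ∈ doubledDomain (En n) S, q.1 ∈ Metric.closedBall 0 (√n) ∧
      IsMaxOn (doubled u v N g) (doubledDomain (En n) S) q := by
  set K : Set (En n × En n × ℝ) :=
    Metric.closedBall 0 (√n) ×ˢ Metric.closedBall 0 (√n + L / N) ×ˢ Icc 0 S
  have hcompact : IsCompact K :=
    (isCompact_closedBall _ _).prod ((isCompact_closedBall _ _).prod isCompact_Icc)
  have hne : K.Nonempty := by
    refine ⟨(0, 0, 0), ?_, ?_, left_mem_Icc.2 hS⟩ <;>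
      exact Metric.mem_closedBall_self (by positivity)
  obtain ⟨q, ⟨hqx, -, hqt⟩, hmax⟩ := hcompact.exists_isMaxOn hne
    ((continuousOn_doubled hu hv.continuous hg).mono fun p hp => hp.2.2)
  -- Translating `x` into the ball takes `y` along, so only pairs far from the diagonal are left.
  have near (x y : En n) (t : ℝ) (ht : t ∈ Icc 0 S) (hxy : ‖x - y‖ ≤ L / N) :
      doubled u v N g (x, y, t) ≤ doubled u v N g q := by
    obtain ⟨k, hk⟩ := exists_add_intVec_mem_closedBall x
    rw [← doubled_add_intVec huper hvper x y t k]
    refine hmax (show (_, _, _) ∈ K from ⟨hk, ?_, ht⟩)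
    rw [mem_closedBall_zero_iff] at hk ⊢
    calc ‖y + intVec n k‖ = ‖(x + intVec n k) - (x - y)‖ := by congr 1; abel
      _ ≤ ‖x + intVec n k‖ + ‖x - y‖ := norm_sub_le _ _
      _ ≤ √n + L / N := add_le_add hk hxy
  refine ⟨q, hqt, hqx, fun ⟨x, y, t⟩ ht => ?_⟩
  obtain hxy | hxy := le_total ‖x - y‖ (L / N)
  · exact near x y t ht hxy
  · refine (doubled_le_diagonal hv ?_).trans (near x x t ht (by simpa using by positivity))
    rwa [div_le_iff₀' hN] at hxy

theorem EvolSubIneq.deriv_add_le (hsub : EvolSubIneq H u uo) {ψ : En n → ℝ} (hψ : ContDiff ℝ 1 ψ)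
    (hg : ContDiff ℝ 1 g) {x : En n} {t : ℝ} (ht : 0 < t)
    (hmax : IsLocalMax (fun q : En n × ℝ => u q - (ψ q.1 + g q.2)) (x, t)) :
    deriv g t + H x (gradient ψ x) + u (x, t) - uo (x, t) ≤ 0 := by
  have hderiv : fderiv ℝ (fun q : En n × ℝ => ψ q.1 + g q.2) (x, t) (0, 1) = deriv g t := by
    have hψx : HasFDerivAt ψ (fderiv ℝ ψ x) (x, t).1 :=
      (hψ.differentiable one_ne_zero x).hasFDerivAt
    have hgt : HasFDerivAt g (fderiv ℝ g t) (x, t).2 :=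
      (hg.differentiable one_ne_zero t).hasFDerivAt
    have hsum := (hψx.comp (x, t) hasFDerivAt_fst).add (hgt.comp (x, t) hasFDerivAt_snd)
    exact (DFunLike.congr_fun hsum.fderiv _).trans (by simp)
  have hgrad : gradient (fun z => ψ z + g t) x = gradient ψ x := by
    simp only [gradient, fderiv_add_const]
  have h := hsub (fun q => ψ q.1 + g q.2)
    ((hψ.comp contDiff_fst).add (hg.comp contDiff_snd)) x t ht hmax
  rwa [hderiv, hgrad] at h

theorem deriv_add_hamiltonian_le_of_isMaxOn_doubled (hsub : EvolSubIneq H u uo)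
    (hsup : StatSuperIneq H 1 v vo fun _ => c) (hg : ContDiff ℝ 1 g) {x y : En n} {t : ℝ}
    (ht : t ∈ Ioo 0 S) (hmax : IsMaxOn (doubled u v N g) (doubledDomain (En n) S) (x, y, t))
    (hdom : doubled uo vo N g (x, y, t) ≤ doubled u v N g (x, y, t)) :
    deriv g t + c + H x ((2 * N) • (x - y)) ≤ H y ((2 * N) • (x - y)) := by
  have hmaxx : IsLocalMax (fun q : En n × ℝ => u q - (N * ‖q.1 - y‖ ^ 2 + g q.2)) (x, t) := by
    have htime : ∀ᶠ q : En n × ℝ in 𝓝 (x, t), q.2 ∈ Ioo 0 S :=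
      continuous_snd.continuousAt.eventually (isOpen_Ioo.mem_nhds ht)
    filter_upwards [htime] with q hq
    have h : doubled u v N g (q.1, y, q.2) ≤ doubled u v N g (x, y, t) :=
      hmax (show (q.1, y, q.2) ∈ doubledDomain (En n) S from Ioo_subset_Icc_self hq)
    simp only [doubled] at h
    linarith
  have hminy : IsLocalMin (fun z => v z - -N * ‖z - x‖ ^ 2) y := by
    refine Eventually.of_forall fun z => ?_
    have h : doubled u v N g (x, z, t) ≤ doubled u v N g (x, y, t) :=
      hmax (show (x, z, t) ∈ doubledDomain (En n) S from Ioo_subset_Icc_self ht)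
    simp only [doubled, norm_sub_rev x] at h
    linarith
  have hx := hsub.deriv_add_le (contDiff_const_mul_norm_sub_sq N y) hg ht.1 hmaxx
  have hy := hsup _ (contDiff_const_mul_norm_sub_sq (-N) x) y hminy
  have hp : (2 * -N) • (y - x) = (2 * N) • (x - y) := by
    rw [mul_neg, neg_smul, ← smul_neg, neg_sub]
  rw [gradient_const_mul_norm_sub_sq] at hx hy
  rw [hp] at hy
  simp only [doubled] at hdom
  linarith

theorem exists_pos_forall_dist_lt_imp_lt_add {X Y : Type*} [PseudoMetricSpace X]
    [PseudoMetricSpace Y] {f : X → Y → ℝ} (hf : Continuous fun q : X × Y => f q.1 q.2)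
    {K : Set X} (hK : IsCompact K) {P : Set Y} (hP : IsCompact P) (hκ : 0 < κ) :
    ∃ δ > 0, ∀ x ∈ K, ∀ p ∈ P, ∀ y, dist x y < δ → f y p < f x p + κ := by
  have huc := (hK.prod hP).uniformContinuousAt_of_continuousAt _
    (fun q _ => hf.continuousAt) (Metric.dist_mem_uniformity hκ)
  obtain ⟨δ, hδ, h⟩ := Metric.mem_uniformity_dist.1 huc
  refine ⟨δ, hδ, fun x hx p hp y hxy => ?_⟩
  have hdist : dist (f x p) (f y p) < κ :=
    h (a := (x, p)) (b := (y, p)) (by simpa [Prod.dist_eq, hδ] using hxy) ⟨hx, hp⟩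
  rw [Real.dist_eq] at hdist
  linarith [(abs_lt.1 hdist).1]

theorem eventually_hamiltonian_lt (hH : Continuous fun q : En n × En n => H q.1 q.2)
    {K : Set (En n)} (hK : IsCompact K) (hκ : 0 < κ) (L : ℝ) :
    ∀ᶠ N : ℝ in atTop, ∀ x ∈ K, ∀ y, N * ‖x - y‖ ≤ L →
      H y ((2 * N) • (x - y)) < H x ((2 * N) • (x - y)) + κ := by
  obtain ⟨δ, hδ, hHδ⟩ := exists_pos_forall_dist_lt_imp_lt_add hH hK
    (isCompact_closedBall (0 : En n) (2 * L)) hκ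
  filter_upwards [eventually_gt_atTop 0, eventually_gt_atTop (L / δ)] with N hN hNδ x hx y hxy
  refine hHδ x hx _ ?_ y ?_
  · rw [mem_closedBall_zero_iff, norm_smul, Real.norm_of_nonneg (by positivity)]
    linarith
  · rw [div_lt_iff₀ hδ] at hNδ
    rw [dist_eq_norm]
    exact lt_of_mul_lt_mul_left (hxy.trans_lt hNδ) hN.le

theorem doubled_initial_le (hv : LipschitzWith L v) (hinit : ∀ x, u (x, 0) ≤ v x + M)
    (hg₀ : 0 ≤ g 0) (hN : 0 < N) (hNε : (L : ℝ) ^ 2 ≤ N * ε) {x y : En n}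
    (hxy : N * ‖x - y‖ ≤ L) : doubled u v N g (x, y, 0) ≤ M + ε := by
  have hlip : v x ≤ v y + L * ‖x - y‖ := dist_eq_norm x y ▸ hv.le_add_mul x y
  have hsmall : L * ‖x - y‖ ≤ ε := by
    refine le_of_mul_le_mul_left ?_ hN
    calc N * (L * ‖x - y‖) = L * (N * ‖x - y‖) := by ring
      _ ≤ L * L := by gcongr
      _ ≤ N * ε := by rwa [← sq]
  have hpen : 0 ≤ N * ‖x - y‖ ^ 2 := by positivity
  simp only [doubled]
  linarith [hinit x]

theorem eventually_doubled_le_of_isMaxOn (hH : Continuous fun q : En n × En n => H q.1 q.2)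
    (hsub : EvolSubIneq H u uo) (hsup : StatSuperIneq H 1 v vo fun _ => c)
    (hv : LipschitzWith L v) {K : Set (En n)} (hK : IsCompact K)
    (hg : ContDiff ℝ 1 g) (hg₀ : 0 ≤ g 0) (hκ : 0 < κ) (hg' : ∀ t, 0 ≤ t → κ - c ≤ deriv g t)
    (hε : 0 < ε) (hinit : ∀ x, u (x, 0) ≤ v x + M) (hfinal : ∀ x y, u (x, S) - v y - g S ≤ M) :
    ∀ᶠ N in atTop, ∀ q ∈ doubledDomain (En n) S, q.1 ∈ K →
      IsMaxOn (doubled u v N g) (doubledDomain (En n) S) q →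
      doubled uo vo N g q ≤ doubled u v N g q → doubled u v N g q ≤ M + ε := by
  filter_upwards [eventually_gt_atTop 0, eventually_ge_atTop ((L : ℝ) ^ 2 / ε),
    eventually_hamiltonian_lt hH hK hκ L] with N hN hNε hHN ⟨x, y, t⟩ ht hx hmax hdom
  rw [div_le_iff₀ hε] at hNε
  have hxy : N * ‖x - y‖ ≤ L := mul_norm_sub_le_of_isMaxOn_doubled hv ht hmax
  obtain rfl | ht₀ := (show 0 ≤ t from ht.1).eq_or_lt
  · exact doubled_initial_le hv hinit hg₀ hN hNε hxy
  obtain rfl | htS := (show t ≤ S from ht.2).eq_or_lt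
  · have hpen : 0 ≤ N * ‖x - y‖ ^ 2 := by positivity
    simp only [doubled]
    linarith [hfinal x y]
  · have hvisc := deriv_add_hamiltonian_le_of_isMaxOn_doubled hsub hsup hg ⟨ht₀, htS⟩ hmax hdom
    linarith [hg' t ht₀.le, hHN x hx y hxy]

end Doubling

section Comparison

/- The term `ε exp (m (t - T))` is `ε` at time `T` but, for large `m`, prohibitive at `T + 1`; this
keeps the maximum point away from the end of the time interval. -/
theorem exists_time_penalty (c T B : ℝ) {ε : ℝ} (hε : 0 < ε) :
    ∃ g : ℝ → ℝ, ContDiff ℝ 1 g ∧ 0 ≤ g 0 ∧ g T = ε - c * T ∧ B ≤ g (T + 1) ∧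
      ∃ κ > 0, ∀ t, 0 ≤ t → κ - c ≤ deriv g t := by
  set m : ℝ := max 1 ((B + c * (T + 1)) / ε)
  refine ⟨fun t => ε * Real.exp (m * (t - T)) - c * t, by fun_prop, ?_, by simp, ?_,
    ε * m * Real.exp (m * (0 - T)), by positivity, fun t ht => ?_⟩
  · simp only [mul_zero, sub_zero]
    positivity
  · have hlarge : B + c * (T + 1) ≤ m * ε := (div_le_iff₀ hε).1 (le_max_right _ _)
    have hexp : ε * m ≤ ε * Real.exp m :=
      mul_le_mul_of_nonneg_left (by linarith [Real.add_one_le_exp m]) hε.le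
    simp only [add_sub_cancel_left, mul_one]
    linarith
  · have hderiv : HasDerivAt (fun t => ε * Real.exp (m * (t - T)) - c * t)
        (ε * (Real.exp (m * (t - T)) * m) - c) t := by
      have hexp := (((hasDerivAt_id' t).sub_const T).const_mul m).exp.const_mul ε
      simpa only [mul_one] using hexp.fun_sub ((hasDerivAt_id' t).const_mul c)
    rw [hderiv.deriv, mul_comm (Real.exp _), ← mul_assoc]
    gcongr

variable {n : ℕ} {H₁ H₂ : En n → En n → ℝ} {u₁ u₂ : En n × ℝ → ℝ} {v₁ v₂ : En n → ℝ} {c M : ℝ}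

theorem SysSub.add_mul_le_add_of_pos (hsub : SysSub H₁ H₂ u₁ u₂)
    (hH₁ : Continuous fun q : En n × En n => H₁ q.1 q.2)
    (hH₂ : Continuous fun q : En n × En n => H₂ q.1 q.2)
    (hu₁ : ContinuousOn u₁ {q | 0 ≤ q.2}) (hu₂ : ContinuousOn u₂ {q | 0 ≤ q.2})
    (hu₁per : ZPeriodicST u₁) (hu₂per : ZPeriodicST u₂) (hsup : ErgSuper H₁ H₂ v₁ v₂ c)
    (hv₁ : IsLip v₁) (hv₂ : IsLip v₂) (hv₁per : ZPeriodic v₁) (hv₂per : ZPeriodic v₂)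
    (hinit₁ : ∀ x, u₁ (x, 0) ≤ v₁ x + M) (hinit₂ : ∀ x, u₂ (x, 0) ≤ v₂ x + M)
    {T ε : ℝ} (hT : 0 ≤ T) (hε : 0 < ε) (x : En n) :
    u₁ (x, T) + c * T ≤ v₁ x + M + 2 * ε ∧ u₂ (x, T) + c * T ≤ v₂ x + M + 2 * ε := by
  obtain ⟨L₁, hL₁⟩ := hv₁
  obtain ⟨L₂, hL₂⟩ := hv₂
  have hS : 0 ≤ T + 1 := by positivity
  obtain ⟨B₁, hB₁⟩ := hu₁per.exists_forall_sub_le hu₁ hv₁per hL₁.continuous hS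
  obtain ⟨B₂, hB₂⟩ := hu₂per.exists_forall_sub_le hu₂ hv₂per hL₂.continuous hS
  obtain ⟨g, hg, hg₀, hgT, hgS, κ, hκ, hg'⟩ :=
    exists_time_penalty c T (max B₁ B₂ - M) hε
  have hfinal₁ (x y) : u₁ (x, T + 1) - v₁ y - g (T + 1) ≤ M := by
    linarith [le_max_left B₁ B₂, hB₁ x y]
  have hfinal₂ (x y) : u₂ (x, T + 1) - v₂ y - g (T + 1) ≤ M := by
    linarith [le_max_right B₁ B₂, hB₂ x y]
  have hball := isCompact_closedBall (0 : En n) (√n)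
  obtain ⟨N, hN, hbound₁, hbound₂⟩ := ((eventually_gt_atTop 0).and
    ((eventually_doubled_le_of_isMaxOn hH₁ hsub.1 hsup.1 hL₁ hball hg hg₀ hκ hg' hε hinit₁
      hfinal₁).and (eventually_doubled_le_of_isMaxOn hH₂ hsub.2 hsup.2 hL₂ hball hg hg₀ hκ hg' hε
      hinit₂ hfinal₂))).exists
  obtain ⟨q₁, hq₁, hq₁K, hmax₁⟩ :=
    exists_isMaxOn_doubled hu₁ hu₁per hL₁ hv₁per hg.continuous hN hS
  obtain ⟨q₂, hq₂, hq₂K, hmax₂⟩ :=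
    exists_isMaxOn_doubled hu₂ hu₂per hL₂ hv₂per hg.continuous hN hS
  obtain ⟨hle₁, hle₂⟩ : doubled u₁ v₁ N g q₁ ≤ M + ε ∧ doubled u₂ v₂ N g q₂ ≤ M + ε := by
    obtain hle | hle := le_total (doubled u₂ v₂ N g q₂) (doubled u₁ v₁ N g q₁)
    · have h := hbound₁ q₁ hq₁ hq₁K hmax₁ ((hmax₂ hq₁).trans hle)
      exact ⟨h, hle.trans h⟩
    · have h := hbound₂ q₂ hq₂ hq₂K hmax₂ ((hmax₁ hq₂).trans hle)
      exact ⟨hle.trans h, h⟩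
  have hdiag : (x, x, T) ∈ doubledDomain (En n) (T + 1) := ⟨hT, by simp⟩
  have hx₁ := (hmax₁ hdiag).trans hle₁
  have hx₂ := (hmax₂ hdiag).trans hle₂
  rw [doubled_diagonal, hgT] at hx₁ hx₂
  constructor <;> linarith

theorem SysSub.add_mul_le_add (hsub : SysSub H₁ H₂ u₁ u₂)
    (hH₁ : Continuous fun q : En n × En n => H₁ q.1 q.2)
    (hH₂ : Continuous fun q : En n × En n => H₂ q.1 q.2)
    (hu₁ : ContinuousOn u₁ {q | 0 ≤ q.2}) (hu₂ : ContinuousOn u₂ {q | 0 ≤ q.2})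
    (hu₁per : ZPeriodicST u₁) (hu₂per : ZPeriodicST u₂) (hsup : ErgSuper H₁ H₂ v₁ v₂ c)
    (hv₁ : IsLip v₁) (hv₂ : IsLip v₂) (hv₁per : ZPeriodic v₁) (hv₂per : ZPeriodic v₂)
    (hinit₁ : ∀ x, u₁ (x, 0) ≤ v₁ x + M) (hinit₂ : ∀ x, u₂ (x, 0) ≤ v₂ x + M)
    (x : En n) {t : ℝ} (ht : 0 ≤ t) :
    u₁ (x, t) + c * t ≤ v₁ x + M ∧ u₂ (x, t) + c * t ≤ v₂ x + M := by
  have approx (ε : ℝ) (hε : 0 < ε) := hsub.add_mul_le_add_of_pos hH₁ hH₂ hu₁ hu₂ hu₁per hu₂per hsup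
    hv₁ hv₂ hv₁per hv₂per hinit₁ hinit₂ ht (half_pos hε) x
  exact ⟨le_of_forall_pos_le_add fun ε hε => by linarith [(approx ε hε).1],
    le_of_forall_pos_le_add fun ε hε => by linarith [(approx ε hε).2]⟩

end Comparison

section Reflection

variable {n : ℕ}

/-- The reflected Hamiltonian `-H(x, -p)`, for which negated supersolutions are subsolutions. -/
def reflectedHamiltonian (H : En n → En n → ℝ) (x p : En n) : ℝ := -H x (-p)

theorem continuous_reflectedHamiltonian {H : En n → En n → ℝ}
    (hH : Continuous fun q : En n × En n => H q.1 q.2) :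
    Continuous fun q : En n × En n => reflectedHamiltonian H q.1 q.2 :=
  (hH.comp (continuous_fst.prodMk continuous_snd.neg)).neg

theorem IsLip.neg {f : En n → ℝ} (hf : IsLip f) : IsLip fun x => -f x :=
  hf.imp fun _ h => h.neg

theorem EvolSuperIneq.neg {H : En n → En n → ℝ} {u uo : En n × ℝ → ℝ}
    (hsup : EvolSuperIneq H u uo) :
    EvolSubIneq (reflectedHamiltonian H) (fun q => -u q) fun q => -uo q := by
  intro φ hφ x t ht hmax
  have hmin : IsLocalMin (fun q => u q - -φ q) (x, t) := by
    filter_upwards [hmax] with q hq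
    linarith
  have h := hsup (fun q => -φ q) hφ.neg x t ht hmin
  rw [gradient_fun_neg, fderiv_fun_neg, neg_apply] at h
  simp only [reflectedHamiltonian]
  linarith

theorem StatSubIneq.neg {H : En n → En n → ℝ} {a : ℝ} {w wo ρ : En n → ℝ}
    (hsub : StatSubIneq H a w wo ρ) :
    StatSuperIneq (reflectedHamiltonian H) a (fun x => -w x) (fun x => -wo x) fun x => -ρ x := by
  intro φ hφ x hmin
  have hmax : IsLocalMax (fun z => w z - -φ z) x := by
    filter_upwards [hmin] with z hz
    linarith
  have h := hsub (fun z => -φ z) hφ.neg x hmax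
  rw [gradient_fun_neg] at h
  simp only [reflectedHamiltonian]
  linarith

variable {H₁ H₂ : En n → En n → ℝ} {u₁ u₂ : En n × ℝ → ℝ} {v₁ v₂ : En n → ℝ} {c M : ℝ}

theorem SysSuper.sub_le_add_mul (hsup : SysSuper H₁ H₂ u₁ u₂)
    (hH₁ : Continuous fun q : En n × En n => H₁ q.1 q.2)
    (hH₂ : Continuous fun q : En n × En n => H₂ q.1 q.2)
    (hu₁ : ContinuousOn u₁ {q | 0 ≤ q.2}) (hu₂ : ContinuousOn u₂ {q | 0 ≤ q.2})
    (hu₁per : ZPeriodicST u₁) (hu₂per : ZPeriodicST u₂) (hsub : ErgSub H₁ H₂ v₁ v₂ c)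
    (hv₁ : IsLip v₁) (hv₂ : IsLip v₂) (hv₁per : ZPeriodic v₁) (hv₂per : ZPeriodic v₂)
    (hinit₁ : ∀ x, v₁ x - M ≤ u₁ (x, 0)) (hinit₂ : ∀ x, v₂ x - M ≤ u₂ (x, 0))
    (x : En n) {t : ℝ} (ht : 0 ≤ t) :
    v₁ x - M ≤ u₁ (x, t) + c * t ∧ v₂ x - M ≤ u₂ (x, t) + c * t := by
  have hneg : SysSub (reflectedHamiltonian H₁) (reflectedHamiltonian H₂) (fun q => -u₁ q)
      fun q => -u₂ q := ⟨hsup.1.neg, hsup.2.neg⟩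
  have hle := hneg.add_mul_le_add (continuous_reflectedHamiltonian hH₁)
    (continuous_reflectedHamiltonian hH₂) hu₁.neg hu₂.neg hu₁per.neg hu₂per.neg
    ⟨hsub.1.neg, hsub.2.neg⟩ hv₁.neg hv₂.neg hv₁per.neg hv₂per.neg (M := M)
    (fun x => by linarith [hinit₁ x]) (fun x => by linarith [hinit₂ x]) x ht
  constructor <;> linarith [hle.1, hle.2]

end Reflection

/-- Boundedness of solutions of (C): `|uᵢ(x,t) + c t| ≤ C`. -/
theorem stmt2 (n : ℕ) (hn : 1 ≤ n) (H₁ H₂ : En n → En n → ℝ)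
    (hH₁cont : Continuous fun q : En n × En n => H₁ q.1 q.2)
    (hH₂cont : Continuous fun q : En n × En n => H₂ q.1 q.2)
    (hH₁per : ZPeriodicH H₁) (hH₂per : ZPeriodicH H₂)
    (hH₁coer : Coercive H₁) (hH₂coer : Coercive H₂)
    (u₀₁ u₀₂ : En n → ℝ) (hu₀₁ : Continuous u₀₁) (hu₀₂ : Continuous u₀₂)
    (hu₀₁per : ZPeriodic u₀₁) (hu₀₂per : ZPeriodic u₀₂)
    (u₁ u₂ : En n × ℝ → ℝ) (hu₁per : ZPeriodicST u₁) (hu₂per : ZPeriodicST u₂)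
    (hsol : SysSolution H₁ H₂ u₀₁ u₀₂ u₁ u₂)
    (c : ℝ) (v₁ v₂ : En n → ℝ) (hv₁per : ZPeriodic v₁) (hv₂per : ZPeriodic v₂)
    (herg : ErgSolution H₁ H₂ v₁ v₂ c) :
    ∃ C : ℝ, 0 < C ∧ ∀ (x : En n) (t : ℝ), 0 ≤ t →
      |u₁ (x, t) + c * t| ≤ C ∧ |u₂ (x, t) + c * t| ≤ C := by
  obtain ⟨hu₁, hu₂, husub, husup, hu₁init, hu₂init⟩ := hsol
  obtain ⟨hv₁, hv₂, hvsub, hvsup⟩ := herg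
  have hv₁lip : IsLip v₁ := hvsub.1.isLip hH₁coer (fun _ => le_rfl) hv₁ hv₁per hv₂ hv₂per
  have hv₂lip : IsLip v₂ := hvsub.2.isLip hH₂coer (fun _ => le_rfl) hv₂ hv₂per hv₁ hv₁per
  obtain ⟨U₁, hU₁⟩ := hu₀₁per.exists_forall_abs_le hu₀₁
  obtain ⟨U₂, hU₂⟩ := hu₀₂per.exists_forall_abs_le hu₀₂
  obtain ⟨V₁, hV₁⟩ := hv₁per.exists_forall_abs_le hv₁
  obtain ⟨V₂, hV₂⟩ := hv₂per.exists_forall_abs_le hv₂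
  simp only [← hu₁init, ← hu₂init, abs_le] at hU₁ hU₂ hV₁ hV₂
  set M := max (U₁ + V₁) (U₂ + V₂)
  have hM₁ : U₁ + V₁ ≤ M := le_max_left _ _
  have hM₂ : U₂ + V₂ ≤ M := le_max_right _ _
  refine ⟨max (max V₁ V₂ + M) 1, by positivity, fun x t ht => ?_⟩
  have upper := husub.add_mul_le_add hH₁cont hH₂cont hu₁ hu₂ hu₁per hu₂per hvsup hv₁lip hv₂lip
    hv₁per hv₂per (M := M) (fun x => by linarith [hU₁ x, hV₁ x])
    (fun x => by linarith [hU₂ x, hV₂ x]) x ht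
  have lower := husup.sub_le_add_mul hH₁cont hH₂cont hu₁ hu₂ hu₁per hu₂per hvsub hv₁lip hv₂lip
    hv₁per hv₂per (M := M) (fun x => by linarith [hU₁ x, hV₁ x])
    (fun x => by linarith [hU₂ x, hV₂ x]) x ht
  have hC := le_max_left (max V₁ V₂ + M) 1
  have hV := And.intro (le_max_left V₁ V₂) (le_max_right V₁ V₂)
  constructor <;> rw [abs_le] <;> constructor <;> linarith [hV₁ x, hV₂ x]
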